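/- arXiv:0712.3858 — 6 statements merged into one kernel-verified Lean document; each statement's English description precedes it below -/
import Mathlib

section
/- Assume the BNFP on G is feasible and δ > 0, and let k ∈ {1,…,φ} be the smallest index such that the maximum s–t flow value in G*(c_{σ(k)}) equals δ. Then the optimal objective value of the BNFP equals c_{σ(k)}. -/
open Finset

variable {N : Type*} [Fintype N] [DecidableEq N]

/-- Total flow out of node `i` along arcs in `A`. -/
def outflow (A : Finset (N × N)) (x : N × N → ℝ) (i : N) : ℝ :=
  ∑ e ∈ A.filter (fun e => e.1 = i), x e

/-- Total flow into node `i` along arcs in `A`. -/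
def inflow (A : Finset (N × N)) (x : N × N → ℝ) (i : N) : ℝ :=
  ∑ e ∈ A.filter (fun e => e.2 = i), x e

/-- Net flow out of node `i`. -/
def excess (A : Finset (N × N)) (x : N × N → ℝ) (i : N) : ℝ :=
  outflow A x i - inflow A x i

/-- `x` is an `s`-`t` flow on the digraph with arc set `A` and capacities `u`. -/
def IsFlow (A : Finset (N × N)) (u : N × N → ℝ) (s t : N) (x : N × N → ℝ) : Prop :=
  (∀ e, e ∉ A → x e = 0) ∧ (∀ e ∈ A, 0 ≤ x e ∧ x e ≤ u e) ∧
    (∀ i, i ≠ s → i ≠ t → excess A x i = 0)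

/-- The value of a flow: net flow out of the source `s`. -/
def flowValue (A : Finset (N × N)) (x : N × N → ℝ) (s : N) : ℝ := excess A x s

/-- `F` is the maximum `s`-`t` flow value. -/
def IsMaxFlowValue (A : Finset (N × N)) (u : N × N → ℝ) (s t : N) (F : ℝ) : Prop :=
  (∃ x, IsFlow A u s t x ∧ flowValue A x s = F) ∧
    ∀ x, IsFlow A u s t x → flowValue A x s ≤ F

/-- A feasible solution of the bottleneck network flow problem. -/
def IsBNFPSolution (E : Finset (N × N)) (u : N × N → ℤ) (b : N → ℤ) (x : N × N → ℝ) : Prop :=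
  (∀ e, e ∉ E → x e = 0) ∧ (∀ e ∈ E, 0 ≤ x e ∧ x e ≤ (u e : ℝ)) ∧
    (∀ i, excess E x i = (b i : ℝ))

/-- Supply nodes. -/
def supplyNodes (b : N → ℤ) : Finset N := univ.filter (fun i => 0 < b i)

/-- Demand nodes. -/
def demandNodes (b : N → ℤ) : Finset N := univ.filter (fun i => b i < 0)

/-- Total supply δ. -/
def totalSupply (b : N → ℤ) : ℤ := ∑ i ∈ supplyNodes b, b i

/-- Arc set of the auxiliary graph `G*`: nodes `V ⊕ Bool`, with source
`Sum.inr false` and sink `Sum.inr true`. -/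
def auxArcs (E : Finset (N × N)) (b : N → ℤ) : Finset ((N ⊕ Bool) × (N ⊕ Bool)) :=
  E.image (fun e => (Sum.inl e.1, Sum.inl e.2)) ∪
    (supplyNodes b).image (fun i => ((Sum.inr false : N ⊕ Bool), Sum.inl i)) ∪
    (demandNodes b).image (fun j => (Sum.inl j, (Sum.inr true : N ⊕ Bool)))

/-- Capacities of the auxiliary graph `G*`. -/
def auxCap (u : N × N → ℤ) (b : N → ℤ) : (N ⊕ Bool) × (N ⊕ Bool) → ℝ
  | (Sum.inl i, Sum.inl j) => (u (i, j) : ℝ)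
  | (Sum.inr _, Sum.inl i) => (b i : ℝ)
  | (Sum.inl j, Sum.inr _) => ((-b j : ℤ) : ℝ)
  | _ => 0

/-- Arc set of the spanning subgraph `G(α)`. -/
noncomputable def subArcs (E : Finset (N × N)) (c : N × N → ℤ) (α : ℝ) : Finset (N × N) :=
  E.filter (fun e => (c e : ℝ) ≤ α)

/-- Bottleneck objective value `max { c_ij : x_ij > 0 }` (as `WithBot ℤ`, `⊥` for empty support). -/
noncomputable def objVal (E : Finset (N × N)) (c : N × N → ℤ) (x : N × N → ℝ) : WithBot ℤ :=
  (E.filter (fun e => 0 < x e)).sup (fun e => (c e : WithBot ℤ))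

/-- Residual capacity of the pair `e` w.r.t. flow `x` on `(A, u)`. -/
def resCap (A : Finset (N × N)) (u : N × N → ℝ) (x : N × N → ℝ) (e : N × N) : ℝ :=
  ((if e ∈ A then u e else 0) - x e) + x e.swap

lemma excess_eq_full (A : Finset (N × N)) (x : N × N → ℝ) (h : ∀ e, e ∉ A → x e = 0) (i : N) :
    excess A x i = ∑ j, x (i, j) - ∑ j, x (j, i) := by
  unfold excess outflow inflow
  congr 1
  · rw [← Finset.sum_filter_add_sum_filter_not univ (fun j => (i, j) ∈ A) (fun j => x (i, j)),
      Finset.sum_eq_zero (s := univ.filter (fun j => ¬ (i, j) ∈ A)), add_zero]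
    · refine Finset.sum_bij' (fun e _ => e.2) (fun j _ => (i, j)) ?_ ?_ ?_ ?_ ?_ <;> simp
      · rintro a b h rfl; exact h
      · rintro a b h rfl; rfl
      · rintro a b h rfl; rfl
    · intro j hj
      exact h _ (Finset.mem_filter.1 hj).2
  · rw [← Finset.sum_filter_add_sum_filter_not univ (fun j => (j, i) ∈ A) (fun j => x (j, i)),
      Finset.sum_eq_zero (s := univ.filter (fun j => ¬ (j, i) ∈ A)), add_zero]
    · refine Finset.sum_bij' (fun e _ => e.1) (fun j _ => (j, i)) ?_ ?_ ?_ ?_ ?_ <;> simp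
      · rintro a b h rfl; exact h
      · rintro a b h rfl; rfl
      · rintro a b h rfl; rfl
    · intro j hj
      exact h _ (Finset.mem_filter.1 hj).2

lemma totalSupply_eq (b : N → ℤ) : (totalSupply b : ℝ) = ∑ v, max (b v : ℝ) 0 := by
  unfold totalSupply supplyNodes
  rw [Finset.sum_filter]
  push_cast
  refine Finset.sum_congr rfl fun v _ => ?_
  split_ifs with h
  · rw [max_eq_left]; exact_mod_cast h.le
  · rw [max_eq_right]; simp; exact_mod_cast not_lt.1 h

lemma pos_sub_neg (a : ℝ) : max a 0 - max (-a) 0 = a := by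
  rcases le_total a 0 with h | h
  · rw [max_eq_right h, max_eq_left (by linarith)]; ring
  · rw [max_eq_left h, max_eq_right (by linarith)]; ring

lemma totalSupply_eq_neg (b : N → ℤ) (hb : ∑ i, b i = 0) :
    (totalSupply b : ℝ) = ∑ v, max (-(b v : ℝ)) 0 := by
  rw [totalSupply_eq, ← sub_eq_zero, ← Finset.sum_sub_distrib]
  simp only [pos_sub_neg]
  exact_mod_cast hb

lemma aux_ll (E : Finset (N × N)) (b : N → ℤ) (i j : N) :
    ((Sum.inl i, Sum.inl j) : (N ⊕ Bool) × (N ⊕ Bool)) ∈ auxArcs E b ↔ (i, j) ∈ E := by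
  simp [auxArcs]

lemma aux_sl (E : Finset (N × N)) (b : N → ℤ) (j : N) :
    ((Sum.inr false, Sum.inl j) : (N ⊕ Bool) × (N ⊕ Bool)) ∈ auxArcs E b ↔ 0 < b j := by
  simp [auxArcs, supplyNodes]

lemma aux_tl (E : Finset (N × N)) (b : N → ℤ) (j : N) :
    ((Sum.inr true, Sum.inl j) : (N ⊕ Bool) × (N ⊕ Bool)) ∉ auxArcs E b := by
  simp [auxArcs]

lemma aux_lt (E : Finset (N × N)) (b : N → ℤ) (j : N) :
    ((Sum.inl j, Sum.inr true) : (N ⊕ Bool) × (N ⊕ Bool)) ∈ auxArcs E b ↔ b j < 0 := by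
  simp [auxArcs, demandNodes]

lemma aux_ls (E : Finset (N × N)) (b : N → ℤ) (j : N) :
    ((Sum.inl j, Sum.inr false) : (N ⊕ Bool) × (N ⊕ Bool)) ∉ auxArcs E b := by
  simp [auxArcs]

lemma aux_rr (E : Finset (N × N)) (b : N → ℤ) (p q : Bool) :
    ((Sum.inr p, Sum.inr q) : (N ⊕ Bool) × (N ⊕ Bool)) ∉ auxArcs E b := by
  simp [auxArcs]

section flows
variable (E : Finset (N × N)) (b : N → ℤ) (x : (N ⊕ Bool) × (N ⊕ Bool) → ℝ)
  (h : ∀ e, e ∉ auxArcs E b → x e = 0)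

lemma excess_s (E : Finset (N × N)) (b : N → ℤ) (x : (N ⊕ Bool) × (N ⊕ Bool) → ℝ)
    (h : ∀ e, e ∉ auxArcs E b → x e = 0) :
    excess (auxArcs E b) x (Sum.inr false) = ∑ v, x (Sum.inr false, Sum.inl v) := by
  rw [excess_eq_full _ _ h]
  simp [h _ (aux_rr E b _ _), h _ (aux_ls E b _)]

lemma excess_l (E : Finset (N × N)) (b : N → ℤ) (x : (N ⊕ Bool) × (N ⊕ Bool) → ℝ)
    (h : ∀ e, e ∉ auxArcs E b → x e = 0) (v : N) :
    excess (auxArcs E b) x (Sum.inl v) =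
      (∑ w, x (Sum.inl v, Sum.inl w) - ∑ w, x (Sum.inl w, Sum.inl v))
        + x (Sum.inl v, Sum.inr true) - x (Sum.inr false, Sum.inl v) := by
  rw [excess_eq_full _ _ h]
  simp [h _ (aux_ls E b _), h _ (aux_tl E b _)]
  ring
end flows

lemma flow_sl_le (E : Finset (N × N)) (u : N × N → ℤ) (b : N → ℤ)
    (x : (N ⊕ Bool) × (N ⊕ Bool) → ℝ)
    (hx : IsFlow (auxArcs E b) (auxCap u b) (Sum.inr false) (Sum.inr true) x) (v : N) :
    x (Sum.inr false, Sum.inl v) ≤ max (b v : ℝ) 0 := by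
  by_cases hv : 0 < b v
  · exact le_max_of_le_left (hx.2.1 _ ((aux_sl E b v).2 hv)).2
  · rw [hx.1 _ (fun h => hv ((aux_sl E b v).1 h))]; exact le_max_right _ _

lemma flow_lt_le (E : Finset (N × N)) (u : N × N → ℤ) (b : N → ℤ)
    (x : (N ⊕ Bool) × (N ⊕ Bool) → ℝ)
    (hx : IsFlow (auxArcs E b) (auxCap u b) (Sum.inr false) (Sum.inr true) x) (v : N) :
    x (Sum.inl v, Sum.inr true) ≤ max (-(b v : ℝ)) 0 := by
  by_cases hv : b v < 0
  · refine le_max_of_le_left ?_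
    have := (hx.2.1 _ ((aux_lt E b v).2 hv)).2
    simpa [auxCap] using this
  · rw [hx.1 _ (fun h => hv ((aux_lt E b v).1 h))]; exact le_max_right _ _

lemma isMax_of_solution (E : Finset (N × N)) (u : N × N → ℤ) (b : N → ℤ) (y : N × N → ℝ)
    (hy : IsBNFPSolution E u b y) :
    IsMaxFlowValue (auxArcs E b) (auxCap u b) (Sum.inr false) (Sum.inr true)
      (totalSupply b : ℝ) := by
  refine ⟨?_, fun x hx => ?_⟩
  · let x : (N ⊕ Bool) × (N ⊕ Bool) → ℝ := fun e => match e with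
      | (Sum.inl i, Sum.inl j) => y (i, j)
      | (Sum.inr false, Sum.inl i) => max (b i : ℝ) 0
      | (Sum.inl i, Sum.inr true) => max (-(b i : ℝ)) 0
      | _ => 0
    have h0 : ∀ e, e ∉ auxArcs E b → x e = 0 := by
      rintro ⟨i | p, j | q⟩ he
      · exact hy.1 _ (fun h => he ((aux_ll E b i j).2 h))
      · cases q
        · rfl
        · rw [aux_lt] at he
          have : (0 : ℝ) ≤ b i := by exact_mod_cast not_lt.1 he
          exact max_eq_right (by linarith)
      · cases p
        · rw [aux_sl] at he
          exact max_eq_right (by exact_mod_cast not_lt.1 he)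
        · rfl
      · cases p <;> cases q <;> rfl
    refine ⟨x, ⟨h0, ?_, ?_⟩, ?_⟩
    · rintro ⟨i | p, j | q⟩ he
      · exact hy.2.1 _ ((aux_ll E b i j).1 he)
      · cases q
        · exact absurd he (aux_ls E b i)
        · rw [aux_lt] at he
          have : (b i : ℝ) < 0 := by exact_mod_cast he
          refine ⟨le_max_right _ _, ?_⟩
          simp only [auxCap, x]
          push_cast
          exact max_le le_rfl (by linarith)
      · cases p
        · rw [aux_sl] at he
          have : (0 : ℝ) < b j := by exact_mod_cast he
          exact ⟨le_max_right _ _, max_le le_rfl this.le⟩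
        · exact absurd he (aux_tl E b j)
      · exact absurd he (aux_rr E b p q)
    · rintro (v | p) h1 h2
      · rw [excess_l E b x h0]
        have h3 := hy.2.2 v
        rw [excess_eq_full _ _ hy.1] at h3
        have h4 := pos_sub_neg (b v : ℝ)
        simp only [x]
        linarith
      · cases p <;> simp at h1 h2
    · rw [flowValue, excess_s E b x h0, totalSupply_eq]
  · rw [flowValue, excess_s E b x hx.1, totalSupply_eq]
    exact Finset.sum_le_sum fun v _ => flow_sl_le E u b x hx v

lemma solution_of_flow (E : Finset (N × N)) (u : N × N → ℤ) (b : N → ℤ) (hb : ∑ i, b i = 0)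
    (x : (N ⊕ Bool) × (N ⊕ Bool) → ℝ)
    (hx : IsFlow (auxArcs E b) (auxCap u b) (Sum.inr false) (Sum.inr true) x)
    (hv : flowValue (auxArcs E b) x (Sum.inr false) = totalSupply b) :
    IsBNFPSolution E u b (fun e => x (Sum.inl e.1, Sum.inl e.2)) := by
  have h0 : ∀ e, e ∉ E → x (Sum.inl e.1, Sum.inl e.2) = 0 :=
    fun e he => hx.1 _ (fun h => he ((aux_ll E b _ _).1 h))
  refine ⟨h0, fun e he => hx.2.1 _ ((aux_ll E b _ _).2 he), fun i => ?_⟩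
  rw [flowValue, excess_s E b x hx.1] at hv
  have hc : ∀ v, (∑ w, x (Sum.inl v, Sum.inl w) - ∑ w, x (Sum.inl w, Sum.inl v))
        + x (Sum.inl v, Sum.inr true) - x (Sum.inr false, Sum.inl v) = 0 := fun v => by
    rw [← excess_l E b x hx.1]
    exact hx.2.2 _ (by simp) (by simp)
  have hsum : ∑ v, x (Sum.inl v, Sum.inr true) = totalSupply b := by
    have h1 := Finset.sum_eq_zero (s := univ) fun v _ => hc v
    rw [Finset.sum_sub_distrib, Finset.sum_add_distrib, Finset.sum_sub_distrib,
      Finset.sum_comm, hv] at h1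
    linarith
  have hs := (Finset.sum_eq_sum_iff_of_le fun v _ => flow_sl_le E u b x hx v).1
    (hv.trans (totalSupply_eq b)) i (mem_univ i)
  have ht := (Finset.sum_eq_sum_iff_of_le fun v _ => flow_lt_le E u b x hx v).1
    (hsum.trans (totalSupply_eq_neg b hb)) i (mem_univ i)
  rw [excess_eq_full _ _ h0]
  have h4 := pos_sub_neg (b i : ℝ)
  have h5 := hc i
  dsimp only
  linarith

lemma solution_mono (E E' : Finset (N × N)) (u : N × N → ℤ) (b : N → ℤ) (y : N × N → ℝ)
    (h0 : ∀ e, e ∉ E → y e = 0) (h0' : ∀ e, e ∉ E' → y e = 0)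
    (hu : ∀ e ∈ E', 0 ≤ u e)
    (hy : IsBNFPSolution E u b y) : IsBNFPSolution E' u b y := by
  refine ⟨h0', fun e he => ?_, fun i => ?_⟩
  · by_cases h : e ∈ E
    · exact hy.2.1 e h
    · rw [h0 e h]; exact ⟨le_rfl, by exact_mod_cast hu e he⟩
  · rw [excess_eq_full _ _ h0', ← excess_eq_full _ _ h0]; exact hy.2.2 i

/-- Assume the BNFP is feasible and `δ > 0`, and let
`α = c_{σ(k)}` be the smallest distinct arc weight such that the maximum
`s`-`t` flow value in `G*(c_{σ(k)})` equals `δ`.  Then the optimal objective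
value of the BNFP equals `c_{σ(k)}`. -/
theorem bnfp_optimal_value_eq_threshold
    (V : Type*) [Fintype V] [DecidableEq V] (E : Finset (V × V))
    (c : V × V → ℤ) (u : V × V → ℤ) (b : V → ℤ)
    (hu : ∀ e ∈ E, 0 ≤ u e) (hb : ∑ i, b i = 0)
    (hfeas : ∃ x : V × V → ℝ, IsBNFPSolution E u b x)
    (hδ : 0 < totalSupply b)
    (α : ℤ) (hα : α ∈ E.image c)
    (hmax : IsMaxFlowValue (auxArcs (subArcs E c (α : ℝ)) b) (auxCap u b)
      (Sum.inr false) (Sum.inr true) (totalSupply b : ℝ))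
    (hmin : ∀ β ∈ E.image c, β < α →
      ¬ IsMaxFlowValue (auxArcs (subArcs E c (β : ℝ)) b) (auxCap u b)
        (Sum.inr false) (Sum.inr true) (totalSupply b : ℝ)) :
    (∃ x : V × V → ℝ, IsBNFPSolution E u b x ∧ objVal E c x = (α : WithBot ℤ)) ∧
      ∀ y : V × V → ℝ, IsBNFPSolution E u b y → (α : WithBot ℤ) ≤ objVal E c y := by
  have key : ∀ y : V × V → ℝ, IsBNFPSolution E u b y → (α : WithBot ℤ) ≤ objVal E c y := by
    intro y hy
    have hne : (E.filter (fun e => 0 < y e)).Nonempty := by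
      by_contra hemp
      rw [Finset.not_nonempty_iff_eq_empty, Finset.filter_eq_empty_iff] at hemp
      have hz : ∀ e, y e = 0 := fun e => by
        by_cases he : e ∈ E
        · exact le_antisymm (not_lt.1 (hemp he)) (hy.2.1 e he).1
        · exact hy.1 e he
      have hbz : ∀ i, b i = 0 := fun i => by
        have := hy.2.2 i
        simp [excess, outflow, inflow, hz] at this
        exact_mod_cast this.symm
      simp [totalSupply, hbz] at hδ
    obtain ⟨e, he, hee⟩ := Finset.exists_mem_eq_sup _ hne (fun e => (c e : WithBot ℤ))
    have heE := (Finset.mem_filter.1 he).1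
    unfold objVal
    rw [hee]
    by_contra hlt
    have hlt' : c e < α := by
      rw [not_le] at hlt
      exact_mod_cast hlt
    refine hmin (c e) (Finset.mem_image_of_mem c heE) hlt' (isMax_of_solution _ u b y ?_)
    refine solution_mono E _ u b y hy.1 ?_ (fun e he => hu e (Finset.mem_filter.1 he).1) hy
    intro f hf
    by_cases hfE : f ∈ E
    · by_contra hfy
      have hpos : 0 < y f := lt_of_le_of_ne (hy.2.1 f hfE).1 (Ne.symm hfy)
      have hle := Finset.le_sup (f := fun e => (c e : WithBot ℤ))
        (Finset.mem_filter.2 ⟨hfE, hpos⟩ : f ∈ E.filter (fun e => 0 < y e))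
      rw [hee] at hle
      have hle' : c f ≤ c e := by exact_mod_cast hle
      exact hf (Finset.mem_filter.2 ⟨hfE, by exact_mod_cast hle'⟩)
    · exact hy.1 f hfE
  refine ⟨?_, key⟩
  obtain ⟨⟨x, hx, hv⟩, -⟩ := hmax
  have hsol := solution_of_flow _ u b hb x hx hv
  have hsolE := solution_mono _ E u b _ hsol.1
    (fun e he => hsol.1 e (fun h => he (Finset.mem_filter.1 h).1)) hu hsol
  refine ⟨_, hsolE, le_antisymm ?_ (key _ hsolE)⟩
  refine Finset.sup_le fun e he => ?_
  have hmem : e ∈ subArcs E c (α : ℝ) := by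
    by_contra hn
    have := (Finset.mem_filter.1 he).2
    rw [hsol.1 e hn] at this
    exact lt_irrefl _ this
  have h2 : c e ≤ α := by exact_mod_cast (Finset.mem_filter.1 hmem).2
  exact_mod_cast h2
end

section
/- (Theorem 3.3) Let m* = |E*| = m + |S| + |T| be the number of arcs of the auxiliary graph G*, and suppose x⁰, x¹, …, x^k is a sequence of s–t flows in (subgraphs of) G* with integer values such that v(x⁰) = 0, v(x^k) = δ ≥ 1, and for every 0 ≤ i < k the i-th augmentation strictly increases the flow value by at least (δ − v(x^i))/m*, i.e., v(x^{i+1}) − v(x^i) ≥ (δ − v(x^i))/m* and v(x^{i+1}) > v(x^i). Then the number of augmentations satisfies k ≤ m*·ln δ + 1; in particular, the large capacity augmenting path algorithm performs O(m·log(nB)) augmentations, where B = max_{i∈V}|b_i|. -/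
open Finset

variable {N : Type*} [Fintype N] [DecidableEq N]

/-- **Theorem 3.3.** Let `m* = |E*|` be the number of arcs of the
auxiliary graph `G*`.  If `x⁰, x¹, …, x^k` are `s`-`t` flows in subgraphs of
`G*` with integer values, `v(x⁰) = 0`, `v(x^k) = δ ≥ 1`, and each augmentation
strictly increases the value by at least `(δ − v(x^i)) / m*`, then
`k ≤ m* ln δ + 1` (hence the large capacity augmenting path algorithm performs
`O(m log (nB))` augmentations). -/
theorem large_capacity_augmentation_count
    (V : Type*) [Fintype V] [DecidableEq V] (E : Finset (V × V))
    (c : V × V → ℤ) (u : V × V → ℤ) (b : V → ℤ)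
    (hu : ∀ e ∈ E, 0 ≤ u e) (hb : ∑ i, b i = 0)
    (hδ1 : 1 ≤ totalSupply b)
    (k : ℕ)
    (A : ℕ → Finset ((V ⊕ Bool) × (V ⊕ Bool)))
    (x : ℕ → ((V ⊕ Bool) × (V ⊕ Bool) → ℝ))
    (hA : ∀ i ≤ k, A i ⊆ auxArcs E b)
    (hx : ∀ i ≤ k, IsFlow (A i) (auxCap u b) (Sum.inr false) (Sum.inr true) (x i))
    (hint : ∀ i ≤ k, ∃ z : ℤ, flowValue (A i) (x i) (Sum.inr false) = (z : ℝ))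
    (h0 : flowValue (A 0) (x 0) (Sum.inr false) = 0)
    (hk : flowValue (A k) (x k) (Sum.inr false) = (totalSupply b : ℝ))
    (hstep : ∀ i < k,
      flowValue (A i) (x i) (Sum.inr false)
          < flowValue (A (i + 1)) (x (i + 1)) (Sum.inr false) ∧
        ((totalSupply b : ℝ) - flowValue (A i) (x i) (Sum.inr false))
            / ((auxArcs E b).card : ℝ)
          ≤ flowValue (A (i + 1)) (x (i + 1)) (Sum.inr false)
            - flowValue (A i) (x i) (Sum.inr false)) :
    (k : ℝ) ≤ ((auxArcs E b).card : ℝ) * Real.log (totalSupply b : ℝ) + 1 := by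
  set m : ℝ := ((auxArcs E b).card : ℝ) with hm
  have hm1 : 1 ≤ m := by
    have hne : (supplyNodes b).Nonempty := by
      by_contra h
      rw [Finset.not_nonempty_iff_eq_empty] at h
      simp [totalSupply, h] at hδ1
    obtain ⟨i, hi⟩ := hne
    have hmem : ((Sum.inr false : V ⊕ Bool), (Sum.inl i : V ⊕ Bool)) ∈ auxArcs E b := by
      unfold auxArcs
      exact Finset.mem_union_left _ (Finset.mem_union_right _ (Finset.mem_image_of_mem _ hi))
    have : 1 ≤ (auxArcs E b).card := Finset.card_pos.mpr ⟨_, hmem⟩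
    rw [hm]
    exact_mod_cast this
  have hmpos : 0 < m := by linarith
  generalize hδ : totalSupply b = δ at *
  set v : ℕ → ℝ := fun i => flowValue (A i) (x i) (Sum.inr false) with hv
  have hδ' : (1 : ℝ) ≤ (δ : ℝ) := by exact_mod_cast hδ1
  obtain _ | j := k
  · have : 0 ≤ m * Real.log (δ : ℝ) := mul_nonneg hmpos.le (Real.log_nonneg hδ')
    push_cast
    linarith
  have hq : 0 ≤ 1 - 1 / m := by
    have : 1 / m ≤ 1 := by rw [div_le_one hmpos]; exact hm1
    linarith
  have hrec : ∀ i ≤ j, (δ : ℝ) - v i ≤ (1 - 1 / m) ^ i * δ := by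
    intro i
    induction i with
    | zero => intro _; have : v 0 = 0 := h0; simp [this]
    | succ i ih =>
      intro hi
      have h1 := ih (by omega)
      have h2 : ((δ : ℝ) - v i) / m ≤ v (i + 1) - v i := (hstep i (by omega)).2
      have h3 : (1 - 1 / m) * ((δ : ℝ) - v i) ≤ (1 - 1 / m) * ((1 - 1 / m) ^ i * δ) :=
        mul_le_mul_of_nonneg_left h1 hq
      have h4 : (1 - 1 / m) * ((δ : ℝ) - v i) = (δ - v i) - (δ - v i) / m := by ring
      rw [pow_succ']
      linarith
  have hlast : (1 : ℝ) ≤ δ - v j := by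
    obtain ⟨z, hz⟩ := hint j (by omega)
    have h1 := (hstep j (by omega)).1
    rw [hk, hz] at h1
    have h2 : z < δ := by exact_mod_cast h1
    have h3 : (z : ℝ) + 1 ≤ δ := by exact_mod_cast h2
    have h4 : v j = z := hz
    linarith
  have hexp : (1 - 1 / m) ^ j ≤ Real.exp (-((j : ℝ) / m)) := by
    have h1 : 1 - 1 / m ≤ Real.exp (-(1 / m)) := by
      have := Real.add_one_le_exp (-(1 / m))
      linarith
    calc (1 - 1 / m) ^ j ≤ Real.exp (-(1 / m)) ^ j := pow_le_pow_left₀ hq h1 j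
      _ = Real.exp (-((j : ℝ) / m)) := by
        rw [← Real.exp_nat_mul]; congr 1; ring
  have hδpos : (0 : ℝ) < δ := by linarith
  have h5 : 1 ≤ Real.exp (-((j : ℝ) / m)) * δ :=
    (hlast.trans (hrec j le_rfl)).trans (mul_le_mul_of_nonneg_right hexp hδpos.le)
  have h6 := Real.log_nonneg h5
  rw [Real.log_mul (Real.exp_pos _).ne' hδpos.ne', Real.log_exp] at h6
  have h7 : (j : ℝ) / m ≤ Real.log δ := by linarith
  rw [div_le_iff₀ hmpos] at h7
  push_cast
  linarith
end

section
/- (Theorem 4.2(i)) Let H=(V,E) be an almost unit capacity graph with no parallel arcs, let D ≥ 3 be an integer, let x be an s–t flow in H such that every directed s–t path in the residual graph H_r(x) has at least D arcs (in particular, this holds for the flow produced by the D-shortest augmenting path algorithm), and let x* be a maximum s–t flow in H. Then v(x*) − v(x) ≤ |E|/(D−2). -/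
open Finset

variable {N : Type*} [Fintype N] [DecidableEq N]

/-- An almost unit capacity graph: positive integer capacities, all arcs not
incident to `s` or `t` have capacity 1, and every directed `s`-`t` path
contains at least one arc not incident to `s` or `t`. -/
def IsAlmostUnitCap (A : Finset (N × N)) (u : N × N → ℤ) (s t : N) : Prop :=
  (∀ e ∈ A, 0 < u e) ∧
    (∀ e ∈ A, e.1 ≠ s → e.1 ≠ t → e.2 ≠ s → e.2 ≠ t → u e = 1) ∧
    (∀ p : List N, p.Nodup → p.head? = some s → p.getLast? = some t →
      p.Chain' (fun a b => (a, b) ∈ A) →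
      ∃ q ∈ p.zip p.tail, q.1 ≠ s ∧ q.1 ≠ t ∧ q.2 ≠ s ∧ q.2 ≠ t)

/-- Every directed `s`-`t` path in the residual graph of `x` has at least `D` arcs. -/
def ResidualDistAtLeast (A : Finset (N × N)) (u : N × N → ℤ) (s t : N)
    (x : N × N → ℝ) (D : ℕ) : Prop :=
  ∀ p : List N, p.Nodup → p.head? = some s → p.getLast? = some t →
    p.Chain' (fun a b => 0 < resCap A (fun e => (u e : ℝ)) x (a, b)) →
    D + 1 ≤ p.length

theorem cut_sum {H : Type*} [Fintype H] [DecidableEq H]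
    (A : Finset (H × H)) (u : H × H → ℝ) (s t : H) (x : H × H → ℝ)
    (hx : IsFlow A u s t x) (S : Finset H) (hs : s ∈ S) (ht : t ∉ S) :
    flowValue A x s
      = ∑ e ∈ A, x e * ((if e.1 ∈ S then 1 else 0) - (if e.2 ∈ S then 1 else 0)) := by
  have h1 : ∑ i ∈ S, excess A x i = excess A x s := by
    apply Finset.sum_eq_single_of_mem s hs
    intro b hb hbs
    exact hx.2.2 b hbs (fun h => ht (h ▸ hb))
  unfold flowValue
  rw [← h1]
  simp only [excess, outflow, inflow, Finset.sum_sub_distrib, Finset.sum_filter, mul_sub]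
  congr 1
  · rw [Finset.sum_comm]
    refine Finset.sum_congr rfl fun e _ => ?_
    rw [Finset.sum_ite_eq]; split_ifs <;> simp
  · rw [Finset.sum_comm]
    refine Finset.sum_congr rfl fun e _ => ?_
    rw [Finset.sum_ite_eq]; split_ifs <;> simp

/-- `i` is reachable from `s` by a simple path with at most `k` arcs. -/
def Lev {H : Type*} (R : H → H → Prop) (s : H) (k : ℕ) (i : H) : Prop :=
  ∃ p : List H, p.Nodup ∧ p.head? = some s ∧ p.getLast? = some i ∧ p.IsChain R ∧
    p.length ≤ k + 1

theorem Lev.mono {H : Type*} {R : H → H → Prop} {s : H} {k l : ℕ} {i : H}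
    (h : Lev R s k i) (hkl : k ≤ l) : Lev R s l i := by
  obtain ⟨p, h1, h2, h3, h4, h5⟩ := h
  exact ⟨p, h1, h2, h3, h4, by omega⟩

theorem Lev.self {H : Type*} (R : H → H → Prop) (s : H) (k : ℕ) : Lev R s k s :=
  ⟨[s], by simp, by simp, by simp, by simp, by simp⟩

theorem Lev.step {H : Type*} {R : H → H → Prop} {s : H} {k : ℕ} {i j : H}
    (h : Lev R s k i) (hij : R i j) : Lev R s (k + 1) j := by
  obtain ⟨p, h1, h2, h3, h4, h5⟩ := h
  by_cases hj : j ∈ p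
  · obtain ⟨l1, l2, rfl⟩ := List.append_of_mem hj
    have e : l1 ++ j :: l2 = (l1 ++ [j]) ++ l2 := by simp
    refine ⟨l1 ++ [j], ?_, ?_, by simp, ?_, ?_⟩
    · rw [e] at h1
      exact (List.nodup_append.1 h1).1
    · cases l1 <;> simpa using h2
    · rw [e] at h4
      exact (List.isChain_append.1 h4).1
    · simp at h5 ⊢; omega
  · refine ⟨p ++ [j], ?_, ?_, by simp, ?_, ?_⟩
    · rw [List.nodup_append]
      refine ⟨h1, by simp, ?_⟩
      intro a ha b hb
      simp at hb
      subst hb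
      exact fun h => hj (h ▸ ha)
    · cases p <;> simp_all
    · rw [List.isChain_append]
      refine ⟨h4, by simp, ?_⟩
      intro a ha b hb
      rw [h3] at ha
      simp at ha hb
      subst ha; subst hb
      exact hij
    · simp; omega

theorem sum_le_one_aux (K : Finset ℕ) (c : ℕ → ℝ) (h1 : ∀ k ∈ K, c k ≤ 1)
    (h2 : ∀ k ∈ K, ∀ l ∈ K, k < l → 0 < c k → c l ≤ 0) : ∑ k ∈ K, c k ≤ 1 := by
  by_cases h : ∃ k ∈ K, 0 < c k
  · obtain ⟨k, hk, hp⟩ := h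
    rw [← Finset.add_sum_erase K c hk]
    have : ∑ l ∈ K.erase k, c l ≤ 0 := by
      apply Finset.sum_nonpos
      intro l hl
      rw [Finset.mem_erase] at hl
      rcases lt_or_gt_of_ne hl.1 with h | h
      · by_contra hc
        push Not at hc
        linarith [h2 l hl.2 k hk h hc]
      · exact h2 k hk l hl.2 h hp
    linarith [h1 k hk]
  · push Not at h
    linarith [Finset.sum_nonpos h]

/-- **Theorem 4.2(i).** In an almost unit capacity graph with no
parallel arcs, if every `s`-`t` path in the residual graph of a flow `x` has at
least `D ≥ 3` arcs, and `x*` is a maximum flow, then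
`v(x*) − v(x) ≤ |E| / (D − 2)`. -/
theorem almost_unit_cap_gap_bound_arcs
    (H : Type*) [Fintype H] [DecidableEq H]
    (A : Finset (H × H)) (u : H × H → ℤ) (s t : H)
    (hauc : IsAlmostUnitCap A u s t)
    (D : ℕ) (hD : 3 ≤ D)
    (x : H × H → ℝ) (hx : IsFlow A (fun e => (u e : ℝ)) s t x)
    (hdist : ResidualDistAtLeast A u s t x D)
    (xstar : H × H → ℝ) (hxstar : IsFlow A (fun e => (u e : ℝ)) s t xstar)
    (hmax : ∀ y : H × H → ℝ, IsFlow A (fun e => (u e : ℝ)) s t y →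
      flowValue A y s ≤ flowValue A xstar s) :
    flowValue A xstar s - flowValue A x s ≤ (A.card : ℝ) / ((D : ℝ) - 2) := by
  classical
  obtain ⟨hpos, hunit, hpath⟩ := hauc
  set R : H → H → Prop := fun a b => 0 < resCap A (fun e => (u e : ℝ)) x (a, b) with hR
  have htl : ∀ k, k + 1 ≤ D → ¬ Lev R s k t := by
    rintro k hk ⟨p, h1, h2, h3, h4, h5⟩
    have := hdist p h1 h2 h3 h4
    omega
  have hnn : ∀ e, 0 ≤ x e := by
    intro e
    by_cases he : e ∈ A
    · exact (hx.2.1 e he).1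
    · rw [hx.1 e he]
  have hF : ∀ i j, (i, j) ∈ A → x (i, j) < u (i, j) → R i j := by
    intro i j he hlt
    have := hnn (j, i)
    simp only [hR, resCap, he, if_true, Prod.swap]
    linarith
  have hB : ∀ i j, (i, j) ∈ A → 0 < x (i, j) → R j i := by
    intro i j he hlt
    simp only [hR, resCap, Prod.swap]
    split_ifs with h
    · linarith [(hx.2.1 _ h).2]
    · linarith [hx.1 _ h]
  set S : ℕ → Finset H := fun k => Finset.univ.filter (fun i => Lev R s k i) with hS
  have hmem : ∀ k i, i ∈ S k ↔ Lev R s k i := by intro k i; simp [hS]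
  set c : ℕ → H × H → ℝ := fun k e => (xstar e - x e) *
    ((if e.1 ∈ S k then 1 else 0) - (if e.2 ∈ S k then 1 else 0)) with hc
  have hgap : ∀ k ∈ Finset.Icc 1 (D - 2),
      flowValue A xstar s - flowValue A x s = ∑ e ∈ A, c k e := by
    intro k hk
    rw [Finset.mem_Icc] at hk
    have hs : s ∈ S k := (hmem _ _).2 (Lev.self R s k)
    have ht : t ∉ S k := fun h => htl k (by omega) ((hmem _ _).1 h)
    rw [cut_sum A _ s t xstar hxstar (S k) hs ht, cut_sum A _ s t x hx (S k) hs ht,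
      ← Finset.sum_sub_distrib]
    refine Finset.sum_congr rfl fun e _ => ?_
    simp only [hc]; ring
  have key : ∀ k ∈ Finset.Icc 1 (D - 2), ∀ e ∈ A, 0 < c k e →
      c k e ≤ 1 ∧ Lev R s (k + 1) e.1 ∧ Lev R s (k + 1) e.2 := by
    rintro k hk ⟨i, j⟩ he hp
    rw [Finset.mem_Icc] at hk
    obtain ⟨m, rfl⟩ : ∃ m, k = m + 1 := ⟨k - 1, by omega⟩
    have hx1 := hx.2.1 _ he
    have hx2 := hxstar.2.1 _ he
    have gen : ∀ a b, R a b → Lev R s (m + 1) a → ¬ Lev R s (m + 1) b →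
        Lev R s (m + 1 + 1) a ∧ Lev R s (m + 1 + 1) b ∧ a ≠ s ∧ a ≠ t ∧ b ≠ s ∧ b ≠ t := by
      intro a b hab ha hb
      refine ⟨ha.mono (by omega), ha.step hab, ?_, ?_, ?_, ?_⟩
      · rintro rfl
        exact hb ((Lev.self R a m).step hab)
      · rintro rfl
        exact htl _ (by omega) ha
      · rintro rfl
        exact hb (Lev.self R b _)
      · rintro rfl
        exact htl _ (by omega) (ha.step hab)
    simp only [hc, hmem] at hp ⊢
    by_cases h1 : Lev R s (m + 1) i <;> by_cases h2 : Lev R s (m + 1) j <;>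
      simp only [h1, h2, if_true, if_false] at hp ⊢
    · simp at hp
    · obtain ⟨g1, g2, g3, g4, g5, g6⟩ := gen i j (hF i j he (by linarith)) h1 h2
      have hu : (u (i, j) : ℝ) = 1 := by exact_mod_cast hunit _ he g3 g4 g5 g6
      exact ⟨by linarith, g1, g2⟩
    · obtain ⟨g1, g2, g3, g4, g5, g6⟩ := gen j i (hB i j he (by linarith)) h2 h1
      have hu : (u (i, j) : ℝ) = 1 := by exact_mod_cast hunit _ he g5 g6 g3 g4
      exact ⟨by linarith, g2, g1⟩
    · simp at hp
  have harc : ∀ e ∈ A, ∑ k ∈ Finset.Icc 1 (D - 2), c k e ≤ 1 := by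
    intro e he
    apply sum_le_one_aux
    · intro k hk
      by_cases h : 0 < c k e
      · exact (key k hk e he h).1
      · linarith
    · intro k hk l hl hkl hp
      obtain ⟨-, h1, h2⟩ := key k hk e he hp
      have h1' := (hmem _ _).2 (h1.mono (show k + 1 ≤ l by omega))
      have h2' := (hmem _ _).2 (h2.mono (show k + 1 ≤ l by omega))
      simp [hc, h1', h2']
  have hD' : (0 : ℝ) < (D : ℝ) - 2 := by
    have : (3 : ℝ) ≤ D := by exact_mod_cast hD
    linarith
  rw [le_div_iff₀ hD']
  have e1 : ∑ k ∈ Finset.Icc 1 (D - 2), ∑ e ∈ A, c k e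
      = ((D : ℝ) - 2) * (flowValue A xstar s - flowValue A x s) := by
    rw [← Finset.sum_congr rfl hgap, Finset.sum_const, nsmul_eq_mul, Nat.card_Icc]
    congr 1
    rw [Nat.add_sub_cancel, Nat.cast_sub (by omega)]
    norm_num
  have e2 : ∑ k ∈ Finset.Icc 1 (D - 2), ∑ e ∈ A, c k e ≤ A.card := by
    rw [Finset.sum_comm]
    refine (Finset.sum_le_sum harc).trans ?_
    simp
  rw [mul_comm]
  linarith
end

section
/- (Theorem 4.2(ii)) Let H=(V,E) be an almost unit capacity graph with no parallel arcs, let D ≥ 3 be an integer, let x be an s–t flow in H such that every directed s–t path in the residual graph H_r(x) has at least D arcs, and let x* be a maximum s–t flow in H. Then v(x*) − v(x) ≤ (2|V|/(D−2))². -/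
open Finset

variable {N : Type*} [Fintype N] [DecidableEq N]

/-- Nodes reachable from `s` by at most `k` steps of `R`. -/
noncomputable def reachSet {H : Type*} [Fintype H] [DecidableEq H] (R : H → H → Prop) (s : H) :
    ℕ → Finset H
  | 0 => {s}
  | k + 1 => by
      classical
      exact reachSet R s k ∪ Finset.univ.filter (fun v => ∃ w ∈ reachSet R s k, R w v)

theorem mem_reachSet_succ {H : Type*} [Fintype H] [DecidableEq H] (R : H → H → Prop) (s : H)
    (k : ℕ) (v : H) : v ∈ reachSet R s (k + 1) ↔
      v ∈ reachSet R s k ∨ ∃ w ∈ reachSet R s k, R w v := by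
  simp [reachSet]

theorem reachSet_mono {H : Type*} [Fintype H] [DecidableEq H] (R : H → H → Prop) (s : H) :
    Monotone (reachSet R s) :=
  monotone_nat_of_le_succ fun k v hv => (mem_reachSet_succ R s k v).2 (Or.inl hv)

theorem reachSet_path {H : Type*} [Fintype H] [DecidableEq H] (R : H → H → Prop) (s : H)
    (k : ℕ) : ∀ v ∈ reachSet R s k, ∃ p : List H, p.Nodup ∧ p.head? = some s ∧
      p.getLast? = some v ∧ p.IsChain R ∧ p.length ≤ k + 1 ∧ ∀ w ∈ p, w ∈ reachSet R s k := by
  induction k with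
  | zero =>
    intro v hv
    have : v = s := by simpa [reachSet] using hv
    subst this
    exact ⟨[v], by simp, by simp, by simp, by simp, by simp, by simp [reachSet]⟩
  | succ k ih =>
    intro v hv
    by_cases hvk : v ∈ reachSet R s k
    · obtain ⟨p, h1, h2, h3, h4, h5, h6⟩ := ih v hvk
      exact ⟨p, h1, h2, h3, h4, by omega, fun w hw => reachSet_mono R s (Nat.le_succ k) (h6 w hw)⟩
    · rcases (mem_reachSet_succ R s k v).1 hv with h | ⟨w, hw, hR⟩
      · exact absurd h hvk
      obtain ⟨p, h1, h2, h3, h4, h5, h6⟩ := ih w hw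
      refine ⟨p ++ [v], ?_, ?_, ?_, ?_, ?_, ?_⟩
      · rw [List.nodup_append]
        refine ⟨h1, by simp, ?_⟩
        intro a ha b hb hab
        simp only [List.mem_singleton] at hb
        subst hb
        subst hab
        exact hvk (h6 _ ha)
      · simp [List.head?_append, h2]
      · simp
      · rw [List.isChain_append]
        refine ⟨h4, by simp, ?_⟩
        intro a ha b hb
        rw [h3] at ha
        simp at ha hb
        subst ha
        subst hb
        exact hR
      · simp; omega
      · intro a ha
        rcases List.mem_append.1 ha with ha | ha
        · exact reachSet_mono R s (Nat.le_succ k) (h6 _ ha)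
        · simp only [List.mem_singleton] at ha
          subst ha
          exact hv

theorem excess_eq_sum {H : Type*} [Fintype H] [DecidableEq H]
    (A : Finset (H × H)) (x : H × H → ℝ) (h0 : ∀ e, e ∉ A → x e = 0) (i : H) :
    excess A x i = ∑ j, (x (i, j) - x (j, i)) := by
  have e1 : outflow A x i = ∑ j, x (i, j) := by
    unfold outflow
    rw [Finset.sum_filter, Finset.sum_subset (Finset.subset_univ A)]
    · rw [Fintype.sum_prod_type, Finset.sum_comm]
      simp
    · intro e _ he
      simp [h0 e he]
  have e2 : inflow A x i = ∑ j, x (j, i) := by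
    unfold inflow
    rw [Finset.sum_filter, Finset.sum_subset (Finset.subset_univ A)]
    · rw [Fintype.sum_prod_type]
      simp
    · intro e _ he
      simp [h0 e he]
  rw [excess, e1, e2, Finset.sum_sub_distrib]

theorem flowValue_cut {H : Type*} [Fintype H] [DecidableEq H]
    (A : Finset (H × H)) (u : H × H → ℝ) (s t : H) (x : H × H → ℝ) (hx : IsFlow A u s t x)
    (S : Finset H) (hs : s ∈ S) (ht : t ∉ S) :
    flowValue A x s = ∑ i ∈ S, ∑ j ∈ Sᶜ, (x (i, j) - x (j, i)) := by
  have h1 : flowValue A x s = ∑ i ∈ S, excess A x i := by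
    rw [Finset.sum_eq_single_of_mem s hs]
    · rfl
    · intro i hi his
      exact hx.2.2 i his (fun h => ht (h ▸ hi))
  have h2 : ∑ i ∈ S, ∑ j ∈ S, (x (i, j) - x (j, i)) = 0 := by
    simp only [Finset.sum_sub_distrib]
    rw [sub_eq_zero, Finset.sum_comm]
  rw [h1, Finset.sum_congr rfl (fun i _ => excess_eq_sum A x hx.1 i)]
  simp only [← Finset.sum_add_sum_compl S]
  rw [Finset.sum_add_distrib, h2, zero_add]

theorem flow_gap_cut {H : Type*} [Fintype H] [DecidableEq H]
    (A : Finset (H × H)) (u : H × H → ℝ) (s t : H) (x y : H × H → ℝ) (hx : IsFlow A u s t x)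
    (hy : IsFlow A u s t y) (S : Finset H) (hs : s ∈ S) (ht : t ∉ S) :
    flowValue A y s - flowValue A x s ≤ ∑ i ∈ S, ∑ j ∈ Sᶜ, resCap A u x (i, j) := by
  rw [flowValue_cut A u s t x hx S hs ht, flowValue_cut A u s t y hy S hs ht,
    ← Finset.sum_sub_distrib]
  refine Finset.sum_le_sum fun i _ => ?_
  rw [← Finset.sum_sub_distrib]
  refine Finset.sum_le_sum fun j _ => ?_
  have hyji : 0 ≤ y (j, i) := by
    by_cases h : (j, i) ∈ A
    · exact (hy.2.1 _ h).1
    · rw [hy.1 _ h]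
  have hyij : y (i, j) ≤ if (i, j) ∈ A then u (i, j) else 0 := by
    split_ifs with h
    · exact (hy.2.1 _ h).2
    · rw [hy.1 _ h]
  simp only [resCap, Prod.swap_prod_mk]
  linarith

/-- **Theorem 4.2(ii).** In an almost unit capacity graph with no
parallel arcs, if every `s`-`t` path in the residual graph of a flow `x` has at
least `D ≥ 3` arcs, and `x*` is a maximum flow, then
`v(x*) − v(x) ≤ (2|V| / (D − 2))²`. -/
theorem almost_unit_cap_gap_bound_nodes_sq
    (H : Type*) [Fintype H] [DecidableEq H]
    (A : Finset (H × H)) (u : H × H → ℤ) (s t : H)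
    (hauc : IsAlmostUnitCap A u s t)
    (D : ℕ) (hD : 3 ≤ D)
    (x : H × H → ℝ) (hx : IsFlow A (fun e => (u e : ℝ)) s t x)
    (hdist : ResidualDistAtLeast A u s t x D)
    (xstar : H × H → ℝ) (hxstar : IsFlow A (fun e => (u e : ℝ)) s t xstar)
    (hmax : ∀ y : H × H → ℝ, IsFlow A (fun e => (u e : ℝ)) s t y →
      flowValue A y s ≤ flowValue A xstar s) :
    flowValue A xstar s - flowValue A x s
      ≤ (2 * (Fintype.card H : ℝ) / ((D : ℝ) - 2)) ^ 2 := by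
  classical
  set R : H → H → Prop := fun a b => 0 < resCap A (fun e => (u e : ℝ)) x (a, b) with hR
  set S := reachSet R s with hS
  have htS : ∀ k, k ≤ D - 1 → t ∉ S k := by
    intro k hk ht
    obtain ⟨p, h1, h2, h3, h4, h5, -⟩ := reachSet_path R s k t ht
    have := hdist p h1 h2 h3 h4
    omega
  have hs0 : s ∈ S 0 := by simp [hS, reachSet]
  have hmono : Monotone S := reachSet_mono R s
  have hsS : ∀ k, s ∈ S k := fun k => hmono (Nat.zero_le k) hs0
  set G := flowValue A xstar s - flowValue A x s with hG
  -- bound for a single pair of layers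
  have key : ∀ k, k + 2 ≤ D - 1 →
      G ≤ 2 * ((S (k+1) \ S k).card : ℝ) * ((S (k+2) \ S (k+1)).card : ℝ) := by
    intro k hk
    have hcut := flow_gap_cut A (fun e => (u e : ℝ)) s t x xstar hx hxstar (S (k+1)) (hsS _)
      (htS _ (by omega))
    refine hcut.trans ?_
    have hb : ∀ i ∈ S (k+1), ∀ j ∈ (S (k+1))ᶜ, resCap A (fun e => (u e : ℝ)) x (i, j) ≤
        if i ∈ S (k+1) \ S k then (if j ∈ S (k+2) \ S (k+1) then (2:ℝ) else 0) else 0 := by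
      intro i hi j hj
      rw [Finset.mem_compl] at hj
      by_cases hpos : R i j
      · have hik : i ∉ S k := fun h => hj ((mem_reachSet_succ R s k j).2 (Or.inr ⟨i, h, hpos⟩))
        have hj2 : j ∈ S (k+2) := (mem_reachSet_succ R s (k+1) j).2 (Or.inr ⟨i, hi, hpos⟩)
        rw [if_pos (Finset.mem_sdiff.2 ⟨hi, hik⟩), if_pos (Finset.mem_sdiff.2 ⟨hj2, hj⟩)]
        have his : i ≠ s := fun h => hik (h ▸ hsS k)
        have hjs : j ≠ s := fun h => hj (h ▸ hsS _)
        have hit : i ≠ t := fun h => htS (k+1) (by omega) (h ▸ hi)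
        have hjt : j ≠ t := fun h => htS (k+2) hk (h ▸ hj2)
        have b1 : (if (i, j) ∈ A then ((u (i, j) : ℤ) : ℝ) else 0) ≤ 1 := by
          split_ifs with h
          · rw [hauc.2.1 _ h his hit hjs hjt]; norm_num
          · norm_num
        have b2 : 0 ≤ x (i, j) := by
          by_cases h : (i, j) ∈ A
          · exact (hx.2.1 _ h).1
          · rw [hx.1 _ h]
        have b3 : x (j, i) ≤ 1 := by
          by_cases h : (j, i) ∈ A
          · have h1 := (hx.2.1 _ h).2
            have h2 := hauc.2.1 _ h hjs hjt his hit
            simp only [h2] at h1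
            simpa using h1
          · rw [hx.1 _ h]; norm_num
        simp only [resCap, Prod.swap_prod_mk]
        linarith
      · have h0 : resCap A (fun e => (u e : ℝ)) x (i, j) ≤ 0 := not_lt.1 hpos
        refine h0.trans ?_
        split_ifs <;> norm_num
    refine (Finset.sum_le_sum fun i hi => Finset.sum_le_sum fun j hj => hb i hi j hj).trans ?_
    refine (Finset.sum_le_sum_of_subset_of_nonneg (Finset.subset_univ _) ?_).trans
      ((Finset.sum_le_sum fun i _ => Finset.sum_le_sum_of_subset_of_nonneg
        (Finset.subset_univ _) ?_).trans ?_)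
    · intro i _ _
      refine Finset.sum_nonneg fun j _ => ?_
      split_ifs <;> norm_num
    · intro j _ _
      split_ifs <;> norm_num
    · apply le_of_eq
      have inner : ∀ i : H, (∑ j : H, if i ∈ S (k+1) \ S k then
          (if j ∈ S (k+2) \ S (k+1) then (2:ℝ) else 0) else 0) =
          if i ∈ S (k+1) \ S k then 2 * ((S (k+2) \ S (k+1)).card : ℝ) else 0 := by
        intro i
        by_cases h : i ∈ S (k+1) \ S k
        · simp only [if_pos h]
          rw [Finset.sum_ite_mem, Finset.univ_inter, Finset.sum_const, nsmul_eq_mul, mul_comm]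
        · simp only [if_neg h, Finset.sum_const_zero]
      simp only [inner]
      rw [Finset.sum_ite_mem, Finset.univ_inter, Finset.sum_const, nsmul_eq_mul]
      ring
  have hcard : ∀ k, ((S (k+1) \ S k).card : ℝ) = ((S (k+1)).card : ℝ) - ((S k).card : ℝ) := by
    intro k
    exact Finset.cast_card_sdiff (hmono (Nat.le_succ k))
  have hstep : ∀ m, 2 * m + 2 ≤ D - 1 →
      √G ≤ ((S (2*m+2)).card : ℝ) - ((S (2*m)).card : ℝ) := by
    intro m hm
    have h1 := key (2*m) hm
    have ha := hcard (2*m)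
    have hb := hcard (2*m+1)
    have ha0 : (0:ℝ) ≤ ((S (2*m+1) \ S (2*m)).card : ℝ) := Nat.cast_nonneg _
    have hb0 : (0:ℝ) ≤ ((S (2*m+2) \ S (2*m+1)).card : ℝ) := Nat.cast_nonneg _
    have e : ((S (2*m+2)).card : ℝ) - ((S (2*m)).card : ℝ) =
      ((S (2*m+1) \ S (2*m)).card : ℝ) + ((S (2*m+2) \ S (2*m+1)).card : ℝ) := by
      rw [ha]
      rw [show 2*m+1+1 = 2*m+2 from rfl] at hb
      rw [hb]; ring
    rw [e]
    apply Real.sqrt_le_iff.2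
    refine ⟨by positivity, ?_⟩
    nlinarith [sq_nonneg ((S (2*m+1) \ S (2*m)).card : ℝ), sq_nonneg ((S (2*m+2) \ S (2*m+1)).card : ℝ)]
  have hsum : ∀ M : ℕ, 2 * M ≤ D - 1 → (M : ℝ) * √G ≤ ((S (2*M)).card : ℝ) := by
    intro M
    induction M with
    | zero => intro _; simp
    | succ M ih =>
      intro hM
      have h1 := ih (by omega)
      have h2 := hstep M (by omega)
      rw [show 2 * (M+1) = 2*M+2 by ring]
      push_cast
      linarith
  have hM := hsum ((D-1)/2) (by omega)
  have hle : ((S (2*((D-1)/2))).card : ℝ) ≤ (Fintype.card H : ℝ) := by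
    exact_mod_cast Finset.card_le_univ _
  have hMD : (D : ℝ) - 2 ≤ 2 * (((D-1)/2 : ℕ) : ℝ) := by
    have : D ≤ 2 * ((D-1)/2) + 2 := by omega
    have h : (D : ℝ) ≤ 2 * (((D-1)/2 : ℕ) : ℝ) + 2 := by exact_mod_cast this
    linarith
  have hDpos : (0:ℝ) < (D : ℝ) - 2 := by
    have : (3:ℝ) ≤ D := by exact_mod_cast hD
    linarith
  have hfin : √G ≤ 2 * (Fintype.card H : ℝ) / ((D : ℝ) - 2) := by
    rw [le_div_iff₀ hDpos]
    nlinarith [Real.sqrt_nonneg G, mul_le_mul_of_nonneg_left hMD (Real.sqrt_nonneg G)]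
  exact (Real.sqrt_le_iff.1 hfin).2
end

section
/- Let n and D be positive integers with D ≥ 3, let L ≥ D−2 be an integer, and let a_0, a_1, …, a_L be nonnegative integers with Σ_{i=0}^{L} a_i ≤ n. Then there exists an index 0 ≤ i < L such that a_i · a_{i+1} ≤ (2n/(D−2))². -/
/-- Let `n, D` be positive integers with `D ≥ 3`, let
`L ≥ D − 2`, and let `a_0, …, a_L` be nonnegative integers with
`Σ_{i=0}^{L} a_i ≤ n`.  Then some consecutive product satisfies
`a_i · a_{i+1} ≤ (2n / (D − 2))²`. -/
theorem layer_pigeonhole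
    (n D : ℕ) (hn : 0 < n) (hD : 3 ≤ D)
    (L : ℕ) (hL : D - 2 ≤ L)
    (a : ℕ → ℕ) (hsum : ∑ i ∈ Finset.range (L + 1), a i ≤ n) :
    ∃ i < L, ((a i : ℝ) * (a (i + 1) : ℝ)) ≤ (2 * (n : ℝ) / ((D : ℝ) - 2)) ^ 2 := by
  have hD' : (3 : ℝ) ≤ D := by exact_mod_cast hD
  have hL' : (D : ℝ) - 2 ≤ L := by
    have : D ≤ L + 2 := by omega
    have : (D : ℝ) ≤ L + 2 := by exact_mod_cast this
    linarith
  have hpos : (0 : ℝ) < (D : ℝ) - 2 := by linarith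
  have hLpos : 0 < L := by omega
  set c : ℝ := 2 * (n : ℝ) / ((D : ℝ) - 2) with hc
  have hc0 : 0 ≤ c := by positivity
  have hcD : c * ((D : ℝ) - 2) = 2 * n := by rw [hc]; field_simp
  by_contra! h
  have key : ∀ i ∈ Finset.range L, c < (a i : ℝ) + a (i + 1) := by
    intro i hi
    have h1 := h i (Finset.mem_range.mp hi)
    have h2 : (0 : ℝ) ≤ a i := Nat.cast_nonneg _
    have h3 : (0 : ℝ) ≤ a (i + 1) := Nat.cast_nonneg _
    by_contra! h4
    nlinarith
  have hlt := Finset.sum_lt_sum_of_nonempty (Finset.nonempty_range_iff.mpr hLpos.ne') key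
  rw [Finset.sum_const, Finset.card_range, nsmul_eq_mul, Finset.sum_add_distrib] at hlt
  have s : (∑ i ∈ Finset.range (L + 1), (a i : ℝ)) ≤ n := by exact_mod_cast hsum
  have s1 := s
  have s2 := s
  rw [Finset.sum_range_succ] at s1
  rw [Finset.sum_range_succ'] at s2
  have h5 : (0 : ℝ) ≤ a L := Nat.cast_nonneg _
  have h6 : (0 : ℝ) ≤ a 0 := Nat.cast_nonneg _
  have h7 := mul_le_mul_of_nonneg_left hL' hc0
  linarith
end

section
/- (Quantitative part of Theorem 4.5) Let G=(V,E) be a unit capacity graph (u_ij = 1 for all (i,j)∈E) on which the BNFP is feasible, let c* be its optimal objective value, let α ≥ c* be a real number, let D ≥ 1 be an integer, and let x̄ be an s–t flow in G*(α) such that every directed s–t path in the residual graph of G*(α) with respect to x̄ has at least D+2 arcs (as is the case for the flow produced by the (D+2)-shortest augmenting path algorithm on G*(α)). Then δ − v(x̄) ≤ |E*|/D, where |E*| = m + |S| + |T| is the number of arcs of the auxiliary graph G*. -/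
open Finset

variable {N : Type*} [Fintype N] [DecidableEq N]

/-- `v` is reachable from `s` by a simple `R`-path with at most `n` arcs. -/
def reachIn {M : Type*} (R : M → M → Prop) (s : M) (n : ℕ) (v : M) : Prop :=
  ∃ p : List M, p.Nodup ∧ p.head? = some s ∧ p.getLast? = some v ∧ p.IsChain R ∧ p.length ≤ n + 1

theorem reachIn_self {M : Type*} (R : M → M → Prop) (s : M) (n : ℕ) : reachIn R s n s :=
  ⟨[s], by simp, by simp, by simp, by simp, by simp⟩

theorem reachIn_step {M : Type*} {R : M → M → Prop} {s : M} {n : ℕ} {i j : M}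
    (h : reachIn R s n i) (hij : R i j) : reachIn R s (n + 1) j := by
  obtain ⟨p, h1, h2, h3, h4, h5⟩ := h
  by_cases hj : j ∈ p
  · obtain ⟨l1, l2, rfl⟩ := List.append_of_mem hj
    have e : l1 ++ j :: l2 = (l1 ++ [j]) ++ l2 := by simp
    refine ⟨l1 ++ [j], ?_, ?_, by simp, ?_, ?_⟩
    · rw [e] at h1; exact h1.of_append_left
    · cases l1 <;> simpa using h2
    · rw [e] at h4; exact h4.left_of_append
    · simp at h5 ⊢; omega
  · refine ⟨p ++ [j], ?_, ?_, by simp, ?_, ?_⟩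
    · rw [List.nodup_append]; simp [h1]; rintro a ha rfl; exact hj ha
    · cases p <;> simp_all
    · rw [List.isChain_append]
      refine ⟨h4, by simp, ?_⟩
      intro x hx y hy
      simp at hy; subst hy
      rw [h3] at hx; simp at hx; subst hx; exact hij
    · simp; omega

theorem sum_mul_excess {M : Type*} [Fintype M] (z : M × M → ℝ) (q : M → ℝ) :
    ∑ v, q v * (∑ j, z (v, j) - ∑ j, z (j, v)) = ∑ e : M × M, z e * (q e.1 - q e.2) := by
  simp only [mul_sub, Finset.sum_sub_distrib, Finset.mul_sum]
  congr 1
  · rw [Fintype.sum_prod_type]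
    exact sum_congr rfl fun a _ => sum_congr rfl fun b _ => mul_comm _ _
  · rw [Fintype.sum_prod_type_right]
    exact sum_congr rfl fun a _ => sum_congr rfl fun b _ => mul_comm _ _

theorem excess_eq {M : Type*} [Fintype M] [DecidableEq M] (A : Finset (M × M)) (x : M × M → ℝ)
    (hx : ∀ e, e ∉ A → x e = 0) (i : M) :
    excess A x i = ∑ j, x (i, j) - ∑ j, x (j, i) := by
  unfold excess outflow inflow
  congr 1
  · rw [sum_filter, sum_subset (subset_univ A), Fintype.sum_prod_type]
    · rw [Finset.sum_eq_single i] <;> simp +contextual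
    · intro e _ he; simp [hx e he]
  · rw [sum_filter, sum_subset (subset_univ A), Fintype.sum_prod_type_right]
    · rw [Finset.sum_eq_single i] <;> simp +contextual
    · intro e _ he; simp [hx e he]

theorem gap_generic {M : Type*} [Fintype M] [DecidableEq M] (A : Finset (M × M)) (u : M × M → ℝ)
    (s t : M) (hst : s ≠ t) (x y : M × M → ℝ) (hx : IsFlow A u s t x) (hy : IsFlow A u s t y)
    (hys : ∀ e ∈ A, e.1 = s → y e = u e) (hyt : ∀ e ∈ A, e.2 = t → y e = u e)
    (hu : ∀ e ∈ A, e.1 ≠ s → e.2 ≠ t → u e ≤ 1) (D : ℕ)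
    (hD : ¬ reachIn (fun a b => 0 < resCap A u x (a, b)) s (D + 1) t) :
    (D : ℝ) * (excess A y s - excess A x s) ≤ A.card := by
  classical
  set R : M → M → Prop := fun a b => 0 < resCap A u x (a, b) with hR
  have hx0 : ∀ e, 0 ≤ x e := fun e => by
    by_cases h : e ∈ A
    · exact (hx.2.1 e h).1
    · rw [hx.1 e h]
  have hxle : ∀ e, x e ≤ if e ∈ A then u e else 0 := fun e => by
    by_cases h : e ∈ A
    · simpa [h] using (hx.2.1 e h).2
    · simp [h, hx.1 e h]
  have hmono : ∀ n m v, n ≤ m → reachIn R s n v → reachIn R s m v := by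
    rintro n m v hnm ⟨p, h1, h2, h3, h4, h5⟩
    exact ⟨p, h1, h2, h3, h4, by omega⟩
  let F : M → Finset ℕ := fun v => (range D).filter (fun k => ¬ reachIn R s (k + 1) v)
  let q : M → ℝ := fun v => ((F v).card : ℝ)
  have qzero : ∀ v, reachIn R s 1 v → q v = 0 := by
    intro v hv
    have : F v = ∅ := by
      apply filter_eq_empty_iff.2
      intro k _ h
      exact h (hmono 1 (k + 1) v (by omega) hv)
    simp [q, this]
  have qD : ∀ v, ¬ reachIn R s D v → q v = D := by
    intro v hv
    have : F v = range D := by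
      apply filter_true_of_mem
      intro k hk h
      exact hv (hmono (k + 1) D v (by simp at hk; omega) h)
    simp [q, this]
  have qs : q s = 0 := qzero s (reachIn_self R s 1)
  have qt : q t = D := qD t (fun h => hD (hmono _ _ _ (by omega) h))
  have qstep : ∀ i j, R i j → q j ≤ q i + 1 := by
    intro i j hij
    have : F j ⊆ insert 0 ((F i).image Nat.succ) := by
      intro k hk
      simp only [F, mem_filter, mem_range] at hk
      rcases k with _ | k
      · simp
      · apply mem_insert_of_mem
        apply mem_image_of_mem
        simp only [F, mem_filter, mem_range]
        exact ⟨by omega, fun h => hk.2 (reachIn_step h hij)⟩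
    have h2 := card_le_card this
    have h3 := card_insert_le 0 ((F i).image Nat.succ)
    have h4 : ((F i).image Nat.succ).card ≤ (F i).card := card_image_le
    have : (F j).card ≤ (F i).card + 1 := by omega
    simp only [q]; exact_mod_cast this
  have fwd : ∀ i j, (i, j) ∈ A → x (i, j) < u (i, j) → R i j := by
    intro i j h1 h2
    have := hx0 (j, i)
    simp only [hR, resCap, h1, if_true, Prod.swap]
    linarith
  have bwd : ∀ i j, 0 < x (i, j) → R j i := by
    intro i j h2
    have := hxle (j, i)
    simp only [hR, resCap, Prod.swap]
    linarith
  set z : M × M → ℝ := fun e => y e - x e with hz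
  have key := sum_mul_excess z q
  have key1 := sum_mul_excess z (fun _ => 1)
  have hex : ∀ v, ∑ j, z (v, j) - ∑ j, z (j, v) = excess A y v - excess A x v := by
    intro v
    rw [excess_eq A y hy.1, excess_eq A x hx.1]
    simp only [hz, Finset.sum_sub_distrib]; ring
  simp only [hex] at key key1
  have hzero : ∀ v, v ≠ s → v ≠ t → excess A y v - excess A x v = 0 := by
    intro v h1 h2
    rw [hx.2.2 v h1 h2, hy.2.2 v h1 h2, sub_zero]
  have red : ∀ f : M → ℝ, ∑ v, f v * (excess A y v - excess A x v)
      = f s * (excess A y s - excess A x s) + f t * (excess A y t - excess A x t) := by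
    intro f
    rw [← Finset.sum_pair (f := fun v => f v * (excess A y v - excess A x v)) hst]
    symm
    apply sum_subset (subset_univ _)
    intro v _ hv
    simp at hv
    rw [hzero v hv.1 hv.2, mul_zero]
  rw [red] at key key1
  simp at key1
  rw [qs, qt] at key
  have hterm : ∀ e : M × M, z e * (q e.2 - q e.1) ≤ if e ∈ A then 1 else 0 := by
    rintro ⟨i, j⟩
    by_cases he : (i, j) ∈ A
    swap
    · simp [he, hz, hx.1 _ he, hy.1 _ he]
    simp only [he, if_true]
    have hxe := hx.2.1 _ he
    have hye := hy.2.1 _ he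
    by_cases h1 : i = s
    · subst h1
      have h2 := hys _ he rfl
      rcases hxe.2.lt_or_eq with h3 | h3
      · have := qzero j (reachIn_step (reachIn_self R i 0) (fwd _ _ he h3))
        rw [this, qs]; simp
      · simp [hz, h2, h3]
    by_cases h1' : j = t
    · subst h1'
      have h2 := hyt _ he rfl
      rcases hxe.2.lt_or_eq with h3 | h3
      · have := qD i (fun h => hD (reachIn_step h (fwd _ _ he h3)))
        rw [this, qt]; simp
      · simp [hz, h2, h3]
    have hu1 := hu _ he h1 h1'
    rcases lt_trichotomy (z (i, j)) 0 with h | h | h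
    · have h5 := qstep j i (bwd i j (by simp only [hz] at h; linarith))
      have : -1 ≤ z (i, j) := by simp only [hz]; linarith
      nlinarith
    · simp [h]
    · have h5 := qstep i j (fwd i j he (by simp only [hz] at h; linarith))
      have : z (i, j) ≤ 1 := by simp only [hz]; linarith
      nlinarith
  have hsum := Finset.sum_le_sum (fun e (_ : e ∈ (univ : Finset (M × M))) => hterm e)
  have hneg : ∑ e : M × M, z e * (q e.2 - q e.1) = - ∑ e : M × M, z e * (q e.1 - q e.2) := by
    rw [← Finset.sum_neg_distrib]
    exact sum_congr rfl fun e _ => by ring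
  rw [hneg, ← key] at hsum
  simp at hsum
  have : excess A y t - excess A x t = - (excess A y s - excess A x s) := by linarith
  rw [this] at hsum
  linarith

/-- The extension of a BNFP solution to the auxiliary graph. -/
def auxFlow {W : Type*} (b : W → ℤ) (x : W × W → ℝ) : (W ⊕ Bool) × (W ⊕ Bool) → ℝ
  | (Sum.inl i, Sum.inl j) => x (i, j)
  | (Sum.inr false, Sum.inl i) => if 0 < b i then (b i : ℝ) else 0
  | (Sum.inl j, Sum.inr true) => if b j < 0 then -(b j : ℝ) else 0
  | _ => 0

/-- **quantitative part of Theorem 4.5.** Let `G` be a unit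
capacity graph on which the BNFP is feasible, let `α ≥ c*` (encoded by the
existence of a feasible solution all of whose support arcs have weight `≤ α`),
let `D ≥ 1`, and let `x̄` be an `s`-`t` flow in `G*(α)` such that every
`s`-`t` path in the residual graph of `G*(α)` w.r.t. `x̄` has at least `D + 2`
arcs.  Then `δ − v(x̄) ≤ |E*| / D`, where `E*` is the arc set of `G*`. -/
theorem abst_flow_gap_bound
    (V : Type*) [Fintype V] [DecidableEq V] (E : Finset (V × V))
    (c : V × V → ℤ) (u : V × V → ℤ) (b : V → ℤ)
    (hunit : ∀ e ∈ E, u e = 1) (hb : ∑ i, b i = 0)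
    (α : ℝ)
    (hopt : ∃ x : V × V → ℝ, IsBNFPSolution E u b x ∧
      ∀ e ∈ E, 0 < x e → (c e : ℝ) ≤ α)
    (D : ℕ) (hD : 1 ≤ D)
    (xbar : (V ⊕ Bool) × (V ⊕ Bool) → ℝ)
    (hxbar : IsFlow (auxArcs (subArcs E c α) b) (auxCap u b)
      (Sum.inr false) (Sum.inr true) xbar)
    (hdist : ∀ p : List (V ⊕ Bool), p.Nodup →
      p.head? = some (Sum.inr false) → p.getLast? = some (Sum.inr true) →
      p.Chain' (fun a b' =>
        0 < resCap (auxArcs (subArcs E c α) b) (auxCap u b) xbar (a, b')) →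
      (D + 2) + 1 ≤ p.length) :
    (totalSupply b : ℝ) - flowValue (auxArcs (subArcs E c α) b) xbar (Sum.inr false)
      ≤ ((auxArcs E b).card : ℝ) / (D : ℝ) := by
  obtain ⟨x, ⟨hx1, hx2, hx3⟩, hxc⟩ := hopt
  have hx0 : ∀ e, e ∉ subArcs E c α → x e = 0 := by
    intro e he
    by_cases h : e ∈ E
    · by_contra h0
      apply he
      simp only [subArcs, mem_filter]
      exact ⟨h, hxc e h (lt_of_le_of_ne (hx2 e h).1 (Ne.symm h0))⟩
    · exact hx1 e h
  set A := auxArcs (subArcs E c α) b with hA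
  have mem1 : ∀ i j, ((Sum.inl i, Sum.inl j) : (V ⊕ Bool) × (V ⊕ Bool)) ∈ A ↔
      (i, j) ∈ subArcs E c α := by
    intro i j; simp [hA, auxArcs]
  have mem2 : ∀ i, ((Sum.inr false, Sum.inl i) : (V ⊕ Bool) × (V ⊕ Bool)) ∈ A ↔ 0 < b i := by
    intro i; simp [hA, auxArcs, supplyNodes]
  have mem3 : ∀ i, ((Sum.inl i, Sum.inr true) : (V ⊕ Bool) × (V ⊕ Bool)) ∈ A ↔ b i < 0 := by
    intro i; simp [hA, auxArcs, demandNodes]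
  have mem4 : ∀ i, ((Sum.inr true, Sum.inl i) : (V ⊕ Bool) × (V ⊕ Bool)) ∉ A := by
    intro i; simp [hA, auxArcs]
  have mem5 : ∀ i, ((Sum.inl i, Sum.inr false) : (V ⊕ Bool) × (V ⊕ Bool)) ∉ A := by
    intro i; simp [hA, auxArcs]
  have mem6 : ∀ i j, ((Sum.inr i, Sum.inr j) : (V ⊕ Bool) × (V ⊕ Bool)) ∉ A := by
    intro i j; simp [hA, auxArcs]
  have hsub : ∀ e, e ∈ subArcs E c α → e ∈ E := fun e he => (mem_filter.1 he).1
  have hy0 : ∀ e, e ∉ A → auxFlow b x e = 0 := by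
    rintro ⟨i | i, j | j⟩ he
    · rw [mem1] at he; exact hx0 _ he
    · cases j
      · rfl
      · rw [mem3] at he; simp [auxFlow, he]
    · cases i
      · rw [mem2] at he; simp [auxFlow, he]
      · rfl
    · cases i <;> cases j <;> rfl
  have hys : excess A (auxFlow b x) (Sum.inr false) = totalSupply b := by
    rw [excess_eq A _ hy0]
    simp [Fintype.sum_sum_type, auxFlow, totalSupply, supplyNodes, sum_filter]
  have hyv : ∀ v, excess A (auxFlow b x) (Sum.inl v) = 0 := by
    intro v
    have h := hx3 v
    rw [excess_eq E x hx1] at h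
    rw [excess_eq A _ hy0]
    simp only [Fintype.sum_sum_type, auxFlow, Fintype.sum_bool]
    rcases lt_trichotomy (b v) 0 with h1 | h1 | h1
    · simp only [h1, if_true, if_neg (not_lt.2 h1.le)]; linarith
    · simp [h1] at h ⊢; linarith
    · simp only [h1, if_true, if_neg (not_lt.2 h1.le)]; linarith
  have hy : IsFlow A (auxCap u b) (Sum.inr false) (Sum.inr true) (auxFlow b x) := by
    refine ⟨hy0, ?_, ?_⟩
    · rintro ⟨i | i, j | j⟩ he
      · rw [mem1] at he
        simpa [auxFlow, auxCap] using hx2 _ (hsub _ he)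
      · cases j
        · exact absurd he (mem5 _)
        · rw [mem3] at he
          have : (b i : ℝ) ≤ 0 := by exact_mod_cast he.le
          simp [auxFlow, auxCap, he, this]
      · cases i
        · rw [mem2] at he
          have : (0 : ℝ) ≤ b j := by exact_mod_cast he.le
          simp [auxFlow, auxCap, he, this]
        · exact absurd he (mem4 _)
      · exact absurd he (mem6 _ _)
    · rintro (v | v) h1 h2
      · exact hyv v
      · cases v <;> simp_all
  have hmain := gap_generic A (auxCap u b) (Sum.inr false) (Sum.inr true) (by simp) xbar
    (auxFlow b x) hxbar hy ?_ ?_ ?_ D ?_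
  · rw [hys] at hmain
    have hcard : A.card ≤ (auxArcs E b).card := by
      apply card_le_card
      rw [hA]
      unfold auxArcs
      gcongr
      exact filter_subset _ _
    have hc' : (A.card : ℝ) ≤ (auxArcs E b).card := by exact_mod_cast hcard
    have hDpos : (0 : ℝ) < D := by exact_mod_cast hD
    rw [le_div_iff₀ hDpos]
    unfold flowValue
    linarith
  · rintro ⟨i, j⟩ he hi
    simp only at hi
    subst hi
    rcases j with j | j
    · rw [mem2] at he; simp [auxFlow, auxCap, he]
    · exact absurd he (mem6 _ _)
  · rintro ⟨i, j⟩ he hi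
    simp only at hi
    subst hi
    rcases i with i | i
    · rw [mem3] at he; simp [auxFlow, auxCap, he]
    · exact absurd he (mem6 _ _)
  · rintro ⟨i | i, j | j⟩ he hi hj
    · rw [mem1] at he
      simp [auxCap, hunit _ (hsub _ he)]
    · cases j
      · exact absurd he (mem5 _)
      · simp at hj
    · cases i
      · simp at hi
      · exact absurd he (mem4 _)
    · exact absurd he (mem6 _ _)
  · rintro ⟨p, h1, h2, h3, h4, h5⟩
    have := hdist p h1 h2 h3 h4
    omega
end
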